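/- Let k_δ ∈ L²([0,1]²), δ ∈ [0, δ̄), be stochastic kernels of the form k_δ = k₀ + δ·k̇ + r_δ with k̇, r_δ ∈ L²([0,1]²) and ‖r_δ‖_{L²([0,1]²)}/δ → 0 as δ → 0⁺, and let L_δ be the associated integral operators on L². Suppose L₀ satisfies the mixing condition (A1), and let f₀ be the unique fixed point of L₀ with ∫ f₀ dm = 1. Then: (i) k̇ ∈ V_ker, i.e. ∫₀¹ k̇(x,y) dx = 0 for a.e. y; (ii) there exists δ₂ > 0 such that for every δ ∈ [0, δ₂) the operator L_δ has a unique fixed point f_δ with ∫ f_δ dm = 1, and ‖(f_δ − f₀)/δ − h‖₂ → 0 as δ → 0⁺, where h is the unique element of V satisfying h − L₀ h = g with g(x) := ∫₀¹ k̇(x,y) f₀(y) dy. -/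

import Mathlib

open MeasureTheory

/-- Lebesgue measure restricted to the unit interval `[0,1]`. -/
noncomputable def μ01 : Measure ℝ := volume.restrict (Set.Icc (0 : ℝ) 1)

/-- Two-dimensional Lebesgue measure restricted to the unit square `[0,1]²`. -/
noncomputable def ν01 : Measure (ℝ × ℝ) := μ01.prod μ01


open Filter Topology

instance isProb_μ01 : IsProbabilityMeasure μ01 := ⟨by simp [μ01]⟩

instance isProb_ν01 : IsProbabilityMeasure ν01 := by unfold ν01; infer_instance

section HS

lemma hs_integrable (k : Lp ℝ 2 ν01) (f : Lp ℝ 2 μ01) :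
    Integrable (fun p : ℝ × ℝ => k p * f p.2) (μ01.prod μ01) := by
  have h1 : MemLp (k : ℝ × ℝ → ℝ) 2 (μ01.prod μ01) := Lp.memLp k
  have h2 : MemLp (fun p : ℝ × ℝ => f p.2) 2 (μ01.prod μ01) := (Lp.memLp f).comp_snd μ01
  exact h1.integrable_mul h2

lemma hs_bound (k : Lp ℝ 2 ν01) (f : Lp ℝ 2 μ01) :
    eLpNorm (fun x => ∫ y, k (x, y) * f y ∂μ01) 2 μ01 ≤
      eLpNorm k 2 ν01 * eLpNorm f 2 μ01 := by
  have hk : Measurable (k : ℝ × ℝ → ℝ) := (Lp.stronglyMeasurable k).measurable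
  have hf : Measurable (f : ℝ → ℝ) := (Lp.stronglyMeasurable f).measurable
  rw [eLpNorm_eq_lintegral_rpow_enorm_toReal (by simp) (by simp),
    eLpNorm_eq_lintegral_rpow_enorm_toReal (by simp) (by simp),
    eLpNorm_eq_lintegral_rpow_enorm_toReal (by simp) (by simp),
    ← ENNReal.mul_rpow_of_nonneg _ _ (by simp)]
  refine ENNReal.rpow_le_rpow ?_ (by simp)
  have e : ∫⁻ p, ‖k p‖ₑ ^ (2 : ENNReal).toReal ∂ν01
      = ∫⁻ x, ∫⁻ y, ‖k (x, y)‖ₑ ^ (2 : ENNReal).toReal ∂μ01 ∂μ01 := by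
    have hm : Measurable fun p : ℝ × ℝ => ‖k p‖ₑ ^ (2 : ENNReal).toReal := by fun_prop
    exact lintegral_prod (μ := μ01) (ν := μ01) _ hm.aemeasurable
  rw [e, ← lintegral_mul_const]
  · refine lintegral_mono fun x => ?_
    have hh := ENNReal.lintegral_mul_le_Lp_mul_Lq μ01 Real.HolderConjugate.two_two
      (f := fun y => ‖k (x, y)‖ₑ) (g := fun y => ‖f y‖ₑ) (by fun_prop) (by fun_prop)
    have h1 : ‖∫ y, k (x, y) * f y ∂μ01‖ₑ ≤
        (∫⁻ y, ‖k (x, y)‖ₑ ^ (2 : ℝ) ∂μ01) ^ (1 / 2 : ℝ) *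
          (∫⁻ y, ‖f y‖ₑ ^ (2 : ℝ) ∂μ01) ^ (1 / 2 : ℝ) := by
      refine (enorm_integral_le_lintegral_enorm _).trans (le_trans (le_of_eq ?_) hh)
      simp [enorm_mul]
    have h2 := ENNReal.rpow_le_rpow h1 (z := 2) (by norm_num)
    rw [ENNReal.mul_rpow_of_nonneg _ _ (by norm_num), ← ENNReal.rpow_mul,
      ← ENNReal.rpow_mul] at h2
    norm_num at h2 ⊢
    exact h2
  · exact Measurable.lintegral_prod_right' (f := fun p => ‖k p‖ₑ ^ (2 : ENNReal).toReal) (by fun_prop)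

lemma hs_memLp (k : Lp ℝ 2 ν01) (f : Lp ℝ 2 μ01) :
    MemLp (fun x => ∫ y, k (x, y) * f y ∂μ01) 2 μ01 := by
  refine ⟨(hs_integrable k f).integral_prod_left.aestronglyMeasurable, ?_⟩
  exact (hs_bound k f).trans_lt (ENNReal.mul_lt_top (Lp.memLp k).2 (Lp.memLp f).2)

lemma slice_ae {p : ℝ × ℝ → Prop} (h : ∀ᵐ z ∂ν01, p z) : ∀ᵐ x ∂μ01, ∀ᵐ y ∂μ01, p (x, y) :=
  Measure.ae_ae_of_ae_prod h

lemma exists_hs : ∃ T : Lp ℝ 2 ν01 →L[ℝ] (Lp ℝ 2 μ01 →L[ℝ] Lp ℝ 2 μ01),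
    ∀ k f, T k f =ᵐ[μ01] fun x => ∫ y, k (x, y) * f y ∂μ01 := by
  refine ⟨LinearMap.mkContinuous₂ (LinearMap.mk₂ ℝ (fun k f => (hs_memLp k f).toLp _)
    ?_ ?_ ?_ ?_) 1 ?_, ?_⟩
  · intro k l f
    rw [← MemLp.toLp_add, MemLp.toLp_eq_toLp_iff]
    filter_upwards [slice_ae (Lp.coeFn_add k l), (hs_integrable k f).prod_right_ae,
      (hs_integrable l f).prod_right_ae] with x hx h1 h2
    rw [Pi.add_apply, ← integral_add h1 h2]
    refine integral_congr_ae ?_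
    filter_upwards [hx] with y hy
    rw [hy, Pi.add_apply, add_mul]
  · intro c k f
    rw [← MemLp.toLp_const_smul, MemLp.toLp_eq_toLp_iff]
    filter_upwards [slice_ae (Lp.coeFn_smul c k)] with x hx
    rw [Pi.smul_apply, smul_eq_mul, ← integral_const_mul]
    refine integral_congr_ae ?_
    filter_upwards [hx] with y hy
    simp [hy, mul_assoc]
  · intro k f g
    rw [← MemLp.toLp_add, MemLp.toLp_eq_toLp_iff]
    filter_upwards [(hs_integrable k f).prod_right_ae,
      (hs_integrable k g).prod_right_ae] with x h1 h2
    rw [Pi.add_apply, ← integral_add h1 h2]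
    refine integral_congr_ae ?_
    filter_upwards [Lp.coeFn_add f g] with y hy
    rw [hy, Pi.add_apply, mul_add]
  · intro c k f
    rw [← MemLp.toLp_const_smul, MemLp.toLp_eq_toLp_iff]
    filter_upwards with x
    rw [Pi.smul_apply, smul_eq_mul, ← integral_const_mul]
    refine integral_congr_ae ?_
    filter_upwards [Lp.coeFn_smul c f] with y hy
    simp [hy, mul_left_comm]
  · intro k f
    rw [LinearMap.mk₂_apply, Lp.norm_toLp, one_mul, Lp.norm_def, Lp.norm_def, ← ENNReal.toReal_mul]
    exact ENNReal.toReal_mono (ENNReal.mul_lt_top (Lp.memLp k).2 (Lp.memLp f).2).ne (hs_bound k f)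
  · intro k f
    rw [LinearMap.mkContinuous₂_apply, LinearMap.mk₂_apply]
    exact MemLp.coeFn_toLp _

lemma exists_int : ∃ I : Lp ℝ 2 μ01 →L[ℝ] ℝ, ∀ f, I f = ∫ x, f x ∂μ01 := by
  refine ⟨innerSL ℝ (indicatorConstLp 2 MeasurableSet.univ (measure_ne_top μ01 _) (1 : ℝ)), ?_⟩
  intro f
  rw [innerSL_apply_apply, L2.inner_indicatorConstLp_one, setIntegral_univ]

lemma rect_dense (S : Submodule ℝ (Lp ℝ 2 ν01)) (hS : IsClosed (S : Set (Lp ℝ 2 ν01)))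
    (h : ∀ (A B : Set ℝ) (hA : MeasurableSet A) (hB : MeasurableSet B),
      indicatorConstLp 2 (hA.prod hB) (measure_ne_top ν01 _) (1 : ℝ) ∈ S) : S = ⊤ := by
  have : CompleteSpace S := hS.completeSpace_coe
  rw [← Submodule.orthogonal_eq_bot_iff, Submodule.eq_bot_iff]
  intro k hk
  have hki : Integrable k ν01 := (Lp.memLp k).integrable (by norm_num)
  have hrect : ∀ A B : Set ℝ, MeasurableSet A → MeasurableSet B →
      ∫ p in A ×ˢ B, k p ∂ν01 = 0 := by
    intro A B hA hB
    rw [← L2.inner_indicatorConstLp_one (hA.prod hB) (measure_ne_top ν01 _) k]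
    exact (Submodule.mem_orthogonal S k).1 hk _ (h A B hA hB)
  have huniv : ∫ p, k p ∂ν01 = 0 := by
    have := hrect Set.univ Set.univ .univ .univ
    rwa [Set.univ_prod_univ, setIntegral_univ] at this
  have hall : ∀ s, MeasurableSet s → ∫ p in s, k p ∂ν01 = 0 := by
    intro s hs
    induction s, hs using MeasurableSpace.induction_on_inter
      generateFrom_prod.symm isPiSystem_prod with
    | empty => simp
    | basic t ht =>
      obtain ⟨A, hA, B, hB, rfl⟩ := ht
      exact hrect A B hA hB
    | compl t ht ih => rw [setIntegral_compl ht hki, huniv, ih, sub_zero]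
    | iUnion f hd hm ih =>
      rw [integral_iUnion hm hd hki.integrableOn]
      simp [ih]
  rw [Lp.eq_zero_iff_ae_eq_zero]
  exact hki.ae_eq_zero_of_forall_setIntegral_eq_zero fun s hs _ => hall s hs

lemma hs_compact (T : Lp ℝ 2 ν01 →L[ℝ] (Lp ℝ 2 μ01 →L[ℝ] Lp ℝ 2 μ01))
    (hT : ∀ k f, T k f =ᵐ[μ01] fun x => ∫ y, k (x, y) * f y ∂μ01) (k : Lp ℝ 2 ν01) :
    IsCompactOperator (T k) := by
  let C : Submodule ℝ (Lp ℝ 2 μ01 →L[ℝ] Lp ℝ 2 μ01) :=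
    compactOperator (RingHom.id ℝ) (Lp ℝ 2 μ01) (Lp ℝ 2 μ01)
  have hC : IsClosed (C : Set (Lp ℝ 2 μ01 →L[ℝ] Lp ℝ 2 μ01)) :=
    isClosed_setOfPred_isCompactOperator
  have := rect_dense (C.comap (T : Lp ℝ 2 ν01 →ₗ[ℝ] (Lp ℝ 2 μ01 →L[ℝ] Lp ℝ 2 μ01)))
    (hC.preimage T.continuous) ?_
  · have hk : k ∈ (C.comap (T : Lp ℝ 2 ν01 →ₗ[ℝ] (Lp ℝ 2 μ01 →L[ℝ] Lp ℝ 2 μ01))) := by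
      rw [this]; trivial
    exact hk
  · intro A B hA hB
    let a : Lp ℝ 2 μ01 := indicatorConstLp 2 hA (measure_ne_top μ01 _) (1 : ℝ)
    let J : Lp ℝ 2 μ01 →L[ℝ] ℝ := innerSL ℝ (indicatorConstLp 2 hB (measure_ne_top μ01 _) (1 : ℝ))
    let R : ℝ →L[ℝ] Lp ℝ 2 μ01 := (ContinuousLinearMap.id ℝ ℝ).smulRight a
    have hJ : IsCompactOperator J := isCompactOperator_of_locallyCompactSpace_dom J
    have hRJ : IsCompactOperator (R ∘L J) := hJ.clm_comp R
    have heq : T (indicatorConstLp 2 (hA.prod hB) (measure_ne_top ν01 _) (1 : ℝ)) = R ∘L J := by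
      ext1 f
      apply Lp.ext
      refine (hT _ f).trans ?_
      have e1 : (R ∘L J) f = (∫ y in B, f y ∂μ01) • a := by
        simp only [R, J, ContinuousLinearMap.comp_apply, innerSL_apply_apply,
          L2.inner_indicatorConstLp_one, ContinuousLinearMap.smulRight_apply,
          ContinuousLinearMap.id_apply]
      rw [e1]
      filter_upwards [Lp.coeFn_smul (∫ y in B, f y ∂μ01) a,
        indicatorConstLp_coeFn (p := 2) (hs := hA) (hμs := measure_ne_top μ01 A) (c := (1 : ℝ)),
        slice_ae (indicatorConstLp_coeFn (p := 2) (hs := hA.prod hB)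
          (hμs := measure_ne_top ν01 (A ×ˢ B)) (c := (1 : ℝ)))] with x h1 h2 h3
      rw [h1, Pi.smul_apply, h2, ← integral_indicator hB, smul_eq_mul, ← integral_mul_const]
      refine integral_congr_ae ?_
      filter_upwards [h3] with y hy
      rw [hy]
      by_cases hx : x ∈ A <;> by_cases hy : y ∈ B <;> simp [hx, hy]
    change IsCompactOperator (T _)
    rw [heq]
    exact hRJ

lemma hs_int (T : Lp ℝ 2 ν01 →L[ℝ] (Lp ℝ 2 μ01 →L[ℝ] Lp ℝ 2 μ01))
    (hT : ∀ k f, T k f =ᵐ[μ01] fun x => ∫ y, k (x, y) * f y ∂μ01) (k : Lp ℝ 2 ν01)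
    (f : Lp ℝ 2 μ01) : ∫ x, T k f x ∂μ01 = ∫ y, (∫ x, k (x, y) ∂μ01) * f y ∂μ01 := by
  rw [integral_congr_ae (hT k f), integral_integral_swap (hs_integrable k f)]
  simp_rw [integral_mul_const]

end HS

section Abstract

variable {H : Type*} [NormedAddCommGroup H] [NormedSpace ℝ H] [CompleteSpace H]

lemma tendsto_clm {ι : Type*} {l : Filter ι} {F : ι → H →L[ℝ] H} {v : ι → H} {F₀ : H →L[ℝ] H}
    {v₀ : H} (hF : Tendsto F l (𝓝 F₀)) (hv : Tendsto v l (𝓝 v₀)) :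
    Tendsto (fun i => F i (v i)) l (𝓝 (F₀ v₀)) :=
  ((isBoundedBilinearMap_apply (𝕜 := ℝ) (E := H) (F := H)).continuous.tendsto (F₀, v₀)).comp
    (hF.prodMk_nhds hv)

lemma unit_of_mixing (L : H →L[ℝ] H) (I : H →L[ℝ] ℝ) (f₀ : H) (hL : IsCompactOperator L)
    (hI : ∀ f, I (L f) = I f) (hf₀ : I f₀ = 1)
    (hmix : ∀ g, I g = 0 → Tendsto (fun n : ℕ => ‖(L ^ n) g‖) atTop (𝓝 0)) :
    IsUnit (1 - L + I.smulRight f₀) := by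
  have hP : IsCompactOperator (I.smulRight f₀) := by
    have h1 : IsCompactOperator I := isCompactOperator_of_locallyCompactSpace_dom I
    exact h1.clm_comp ((ContinuousLinearMap.id ℝ ℝ).smulRight f₀)
  have hc : IsCompactOperator (L - I.smulRight f₀ : H →L[ℝ] H) := hL.sub hP
  rcases hc.hasEigenvalue_or_mem_resolventSet (one_ne_zero (α := ℝ)) with h | h
  · exfalso
    obtain ⟨v, hv⟩ := h.exists_hasEigenvector
    have hv0 := hv.2
    have hv1 : L v - I v • f₀ = v := by simpa using hv.apply_eq_smul
    have hIv : I v = 0 := by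
      have := congrArg I hv1
      simp [hI, hf₀] at this
      exact this.symm
    have hLv : L v = v := by simpa [hIv] using hv1
    have hn : ∀ n : ℕ, (L ^ n) v = v := by
      intro n
      induction n with
      | zero => simp
      | succ n ih => rw [pow_succ, mul_apply_eq_comp, hLv, ih]
    have := hmix v hIv
    simp_rw [hn] at this
    have := tendsto_nhds_unique this tendsto_const_nhds
    exact hv0 (norm_eq_zero.1 this.symm)
  · rw [spectrum.mem_resolventSet_iff] at h
    convert h using 1
    simp
    abel

lemma abstract_response (L : ℝ → H →L[ℝ] H) (I : H →L[ℝ] ℝ) (f₀ : H) (D : H →L[ℝ] H)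
    (E : ℝ → H →L[ℝ] H) (δbar : ℝ) (hδ : 0 < δbar)
    (hLe : ∀ δ ∈ Set.Ico 0 δbar, L δ = L 0 + δ • D + E δ)
    (hE : Tendsto (fun δ => δ⁻¹ • E δ) (𝓝[>] 0) (𝓝 0))
    (hL : IsCompactOperator (L 0))
    (hI : ∀ δ ∈ Set.Ico 0 δbar, ∀ f, I (L δ f) = I f) (hf₀ : I f₀ = 1) (hfix : L 0 f₀ = f₀)
    (hmix : ∀ g, I g = 0 → Tendsto (fun n : ℕ => ‖(L 0 ^ n) g‖) atTop (𝓝 0)) :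
    ∃ δ₂ : ℝ, 0 < δ₂ ∧ δ₂ ≤ δbar ∧
      (∀ δ ∈ Set.Ico (0 : ℝ) δ₂, ∃! f : H, L δ f = f ∧ I f = 1) ∧
      (∀ h : H, I h = 0 → h - L 0 h = D f₀ → ∀ fam : ℝ → H,
        (∀ δ ∈ Set.Ico (0 : ℝ) δ₂, L δ (fam δ) = fam δ ∧ I (fam δ) = 1) →
        Tendsto (fun δ : ℝ => ‖δ⁻¹ • (fam δ - f₀) - h‖) (𝓝[>] 0) (𝓝 0)) := by
  set A : ℝ → H →L[ℝ] H := fun δ => 1 - L δ + I.smulRight f₀ with hA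
  have hA0 : IsUnit (A 0) :=
    unit_of_mixing (L 0) I f₀ hL (hI 0 ⟨le_rfl, hδ⟩) hf₀ hmix
  have hmem : ∀ᶠ δ in 𝓝[>] (0 : ℝ), δ ∈ Set.Ico 0 δbar := by
    filter_upwards [Ioo_mem_nhdsGT hδ] with δ h using ⟨h.1.le, h.2⟩
  have hid : Tendsto (fun δ : ℝ => δ) (𝓝[>] 0) (𝓝 0) := tendsto_nhdsWithin_of_tendsto_nhds tendsto_id
  have hLt : Tendsto L (𝓝[>] 0) (𝓝 (L 0)) := by
    have h1 : Tendsto (fun δ : ℝ => L 0 + δ • D + δ • (δ⁻¹ • E δ)) (𝓝[>] 0)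
        (𝓝 (L 0 + (0 : ℝ) • D + (0 : ℝ) • (0 : H →L[ℝ] H))) :=
      (tendsto_const_nhds.add (hid.smul_const D)).add (hid.smul hE)
    simp only [zero_smul, add_zero] at h1
    refine h1.congr' ?_
    filter_upwards [hmem, self_mem_nhdsWithin] with δ h h'
    rw [smul_inv_smul₀ (ne_of_gt h'), hLe δ h]
  have hAt : Tendsto A (𝓝[>] 0) (𝓝 (A 0)) := (tendsto_const_nhds.sub hLt).add tendsto_const_nhds
  have hinv : Tendsto (fun δ => Ring.inverse (A δ)) (𝓝[>] 0) (𝓝 (Ring.inverse (A 0))) := by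
    obtain ⟨u, hu⟩ := hA0
    have := NormedRing.inverse_continuousAt u
    rw [hu] at this
    exact this.tendsto.comp hAt
  have hun : ∀ᶠ δ in 𝓝[>] (0 : ℝ), IsUnit (A δ) :=
    hAt.eventually (Units.isOpen.mem_nhds hA0)
  obtain ⟨ε, hε, hεs⟩ := mem_nhdsGT_iff_exists_Ioo_subset.1 hun
  have hε : 0 < ε := hε
  have hunit : ∀ δ ∈ Set.Ico (0 : ℝ) (min ε δbar), IsUnit (A δ) := by
    intro δ h
    rcases h.1.eq_or_lt with h0 | h0
    · rwa [← h0]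
    · exact hεs ⟨h0, h.2.trans_le (min_le_left _ _)⟩
  have hbar : ∀ δ ∈ Set.Ico (0 : ℝ) (min ε δbar), δ ∈ Set.Ico (0 : ℝ) δbar :=
    fun δ h => ⟨h.1, h.2.trans_le (min_le_right _ _)⟩
  have happ : ∀ δ f, A δ f = f - L δ f + I f • f₀ := fun δ f => by simp [hA]
  have hiff : ∀ δ ∈ Set.Ico (0 : ℝ) (min ε δbar), ∀ f, (L δ f = f ∧ I f = 1) ↔ A δ f = f₀ := by
    intro δ h f
    constructor
    · rintro ⟨h1, h2⟩
      rw [happ, h1, h2]; simp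
    · intro h1
      have h2 : I f = 1 := by
        have := congrArg I h1
        rw [happ] at this
        simpa [hI δ (hbar δ h), hf₀] using this
      refine ⟨?_, h2⟩
      rw [happ, h2, one_smul, add_eq_right, sub_eq_zero] at h1
      exact h1.symm
  have hinvl : ∀ δ, IsUnit (A δ) → ∀ f, Ring.inverse (A δ) (A δ f) = f := by
    intro δ h f
    rw [← mul_apply_eq_comp, Ring.inverse_mul_cancel _ h]; rfl
  have hinvr : ∀ δ, IsUnit (A δ) → ∀ f, A δ (Ring.inverse (A δ) f) = f := by
    intro δ h f
    rw [← mul_apply_eq_comp, Ring.mul_inverse_cancel _ h]; rfl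
  refine ⟨min ε δbar, lt_min hε hδ, min_le_right _ _, ?_, ?_⟩
  · intro δ h
    refine ⟨Ring.inverse (A δ) f₀, (hiff δ h _).2 (hinvr δ (hunit δ h) _), ?_⟩
    intro f hf
    have := (hiff δ h f).1 hf
    rw [← this, hinvl δ (hunit δ h)]
  · intro h hIh hh fam hfam
    have hh' : Ring.inverse (A 0) (D f₀) = h := by
      have : A 0 h = D f₀ := by rw [happ, hIh, zero_smul, add_zero, hh]
      rw [← this, hinvl 0 hA0]
    rw [← tendsto_iff_norm_sub_tendsto_zero]
    have hlim : Tendsto (fun δ : ℝ => Ring.inverse (A δ) ((D + δ⁻¹ • E δ) f₀)) (𝓝[>] 0)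
        (𝓝 (Ring.inverse (A 0) ((D + 0) f₀))) :=
      tendsto_clm hinv (tendsto_clm (tendsto_const_nhds.add hE) tendsto_const_nhds)
    rw [add_zero, hh'] at hlim
    refine hlim.congr' ?_
    filter_upwards [Ioo_mem_nhdsGT (lt_min hε hδ)] with δ hd
    have hd' : δ ∈ Set.Ico (0 : ℝ) (min ε δbar) := ⟨hd.1.le, hd.2⟩
    have hA1 : A δ (fam δ) = f₀ := (hiff δ hd' _).1 (hfam δ hd')
    have hA2 : A δ (fam δ - f₀) = δ • ((D + δ⁻¹ • E δ) f₀) := by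
      rw [map_sub, hA1, happ, hf₀, one_smul, hLe δ (hbar δ hd')]
      simp [hfix, smul_inv_smul₀ hd.1.ne']
      abel
    have hA3 : A δ (δ⁻¹ • (fam δ - f₀)) = (D + δ⁻¹ • E δ) f₀ := by
      rw [map_smul, hA2, inv_smul_smul₀ hd.1.ne']
    rw [← hA3, hinvl δ (hunit δ hd')]

end Abstract

/-- Linear response formula for kernel (Hilbert–Schmidt) operators:
for stochastic kernels `k_δ = k₀ + δ·k̇ + r_δ` with `‖r_δ‖₂/δ → 0` whose operator at
`δ = 0` is mixing, the derivative kernel `k̇` lies in `V_ker`, the perturbed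
operators have unique normalized fixed points `f_δ`, and `(f_δ − f₀)/δ → h` where
`h ∈ V` solves `h − L₀ h = ∫ k̇(·,y) f₀(y) dy`. -/
theorem linear_response_formula_kernel_operators
    (δbar : ℝ) (hδbar : 0 < δbar)
    (k₀ kdot : Lp ℝ 2 ν01) (r : ℝ → Lp ℝ 2 ν01)
    (hr0 : r 0 = 0)
    (hr : Filter.Tendsto (fun δ : ℝ => δ⁻¹ * ‖r δ‖)
      (nhdsWithin 0 (Set.Ioi 0)) (nhds 0))
    (hstoch_nonneg : ∀ δ ∈ Set.Ico (0 : ℝ) δbar,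
      ∀ᵐ p ∂ν01, 0 ≤ (k₀ + δ • kdot + r δ) p)
    (hstoch_int : ∀ δ ∈ Set.Ico (0 : ℝ) δbar,
      ∀ᵐ y ∂μ01, ∫ x, (k₀ + δ • kdot + r δ) (x, y) ∂μ01 = 1)
    (Lop : ℝ → (Lp ℝ 2 μ01 →L[ℝ] Lp ℝ 2 μ01))
    (hLop : ∀ δ ∈ Set.Ico (0 : ℝ) δbar, ∀ f : Lp ℝ 2 μ01,
      ∀ᵐ x ∂μ01, (Lop δ f) x = ∫ y, (k₀ + δ • kdot + r δ) (x, y) * f y ∂μ01)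
    (hmix : ∀ g : Lp ℝ 2 μ01, (∫ x, g x ∂μ01) = 0 →
      Filter.Tendsto (fun n : ℕ => ‖((Lop 0) ^ n) g‖) Filter.atTop (nhds 0))
    (f₀ : Lp ℝ 2 μ01) (hf₀fix : Lop 0 f₀ = f₀) (hf₀int : ∫ x, f₀ x ∂μ01 = 1) :
    (∀ᵐ y ∂μ01, ∫ x, kdot (x, y) ∂μ01 = 0) ∧
    (∃ δ₂ : ℝ, 0 < δ₂ ∧ δ₂ ≤ δbar ∧
      (∀ δ ∈ Set.Ico (0 : ℝ) δ₂,
        ∃! fδ : Lp ℝ 2 μ01, Lop δ fδ = fδ ∧ ∫ x, fδ x ∂μ01 = 1) ∧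
      (∀ g : Lp ℝ 2 μ01,
        (∀ᵐ x ∂μ01, g x = ∫ y, kdot (x, y) * f₀ y ∂μ01) →
        ∀ h : Lp ℝ 2 μ01, (∫ x, h x ∂μ01) = 0 → h - Lop 0 h = g →
        ∀ fam : ℝ → Lp ℝ 2 μ01,
          (∀ δ ∈ Set.Ico (0 : ℝ) δ₂, Lop δ (fam δ) = fam δ ∧ ∫ x, (fam δ) x ∂μ01 = 1) →
          Filter.Tendsto (fun δ : ℝ => ‖δ⁻¹ • (fam δ - f₀) - h‖)
            (nhdsWithin 0 (Set.Ioi 0)) (nhds 0))) := by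
  obtain ⟨T, hT⟩ := exists_hs
  obtain ⟨I, hI⟩ := exists_int
  have hTop : ∀ δ ∈ Set.Ico (0 : ℝ) δbar, Lop δ = T (k₀ + δ • kdot + r δ) := by
    intro δ hδ
    ext1 f
    exact Lp.ext (Filter.EventuallyEq.trans (hLop δ hδ f) (hT _ f).symm)
  have h0 : (0 : ℝ) ∈ Set.Ico (0 : ℝ) δbar := ⟨le_rfl, hδbar⟩
  have hT0 : Lop 0 = T k₀ := by simpa [hr0] using hTop 0 h0
  have hLe : ∀ δ ∈ Set.Ico 0 δbar, Lop δ = Lop 0 + δ • T kdot + T (r δ) := by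
    intro δ hδ
    rw [hTop δ hδ, hT0, map_add, map_add, map_smul]
  have hrs : Tendsto (fun δ : ℝ => δ⁻¹ • r δ) (𝓝[>] 0) (𝓝 0) := by
    rw [tendsto_zero_iff_norm_tendsto_zero]
    refine hr.congr' ?_
    filter_upwards [self_mem_nhdsWithin] with δ hδ
    have hδ' : (0 : ℝ) < δ := hδ
    rw [norm_smul, Real.norm_of_nonneg (inv_nonneg.2 hδ'.le)]
  have hE : Tendsto (fun δ : ℝ => δ⁻¹ • T (r δ)) (𝓝[>] 0) (𝓝 0) := by
    have := (T.continuous.tendsto 0).comp hrs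
    rw [map_zero] at this
    refine this.congr fun δ => ?_
    simp
  have hpres : ∀ δ ∈ Set.Ico 0 δbar, ∀ f, I (Lop δ f) = I f := by
    intro δ hδ f
    rw [hI, hI, hTop δ hδ, hs_int T hT]
    refine integral_congr_ae ?_
    filter_upwards [hstoch_int δ hδ] with y hy
    rw [hy, one_mul]
  refine ⟨?_, ?_⟩
  · have hker : ∀ f, I (T kdot f) = 0 := by
      intro f
      have hlim : Tendsto (fun δ : ℝ => I (T kdot f) + I ((δ⁻¹ • T (r δ)) f)) (𝓝[>] 0)
          (𝓝 (I (T kdot f) + I ((0 : Lp ℝ 2 μ01 →L[ℝ] Lp ℝ 2 μ01) f))) :=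
        tendsto_const_nhds.add
          ((I.continuous.tendsto _).comp (tendsto_clm hE tendsto_const_nhds))
      have hz : Tendsto (fun δ : ℝ => I (T kdot f) + I ((δ⁻¹ • T (r δ)) f)) (𝓝[>] 0) (𝓝 0) := by
        refine tendsto_const_nhds.congr' ?_
        filter_upwards [Ioo_mem_nhdsGT hδbar] with δ hδ
        have hm : δ ∈ Set.Ico 0 δbar := ⟨hδ.1.le, hδ.2⟩
        have h1 := hpres δ hm f
        rw [hLe δ hm] at h1
        simp only [add_apply, smul_apply, map_add,
          map_smul, hpres 0 h0 f, smul_eq_mul] at h1 ⊢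
        have hne : δ ≠ 0 := hδ.1.ne'
        field_simp
        linarith
      have := tendsto_nhds_unique hlim hz
      simpa using this
    have hki : Integrable kdot (μ01.prod μ01) :=
      (Lp.memLp (p := 2) (μ := ν01) kdot).integrable (by norm_num)
    have hu := hki.integral_prod_right
    refine hu.ae_eq_zero_of_forall_setIntegral_eq_zero fun s hs _ => ?_
    have h1 := hker (indicatorConstLp 2 hs (measure_ne_top μ01 _) (1 : ℝ))
    rw [hI, hs_int T hT] at h1
    rw [← h1, ← integral_indicator hs]
    refine integral_congr_ae ?_
    filter_upwards [indicatorConstLp_coeFn (p := 2) (hs := hs) (hμs := measure_ne_top μ01 s)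
      (c := (1 : ℝ))] with y hy
    rw [hy]
    by_cases hys : y ∈ s <;> simp [hys]
  · obtain ⟨δ₂, hp, hle, hex, hresp⟩ := abstract_response Lop I f₀ (T kdot) (fun δ => T (r δ)) δbar
      hδbar hLe hE (by rw [hT0]; exact hs_compact T hT k₀) hpres (by rw [hI, hf₀int]) hf₀fix
      (fun g hg => hmix g (by rw [← hI, hg]))
    simp only [hI] at hex hresp
    refine ⟨δ₂, hp, hle, hex, ?_⟩
    intro g hg h hh hhg fam hfam
    have hgT : g = T kdot f₀ := Lp.ext (Filter.EventuallyEq.trans hg (hT kdot f₀).symm)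
    exact hresp h hh (hhg.trans hgT) fam hfam
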